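/- Let (R, m) be a Noetherian local ring and M a finitely generated R-module of Krull dimension t ≥ 2. Then f⁰_m(M) = e⁰_m(M): if P and Q are polynomials with rational coefficients of degrees t and t−1 respectively such that ℓ_R(M/m^{n+1}M) = P(n) and ℓ_R((m^{n+1}M :_M m)/m^{n+1}M) = Q(n) for all sufficiently large n, then (t−1)! times the leading coefficient of Q equals t! times the leading coefficient of P. -/

import Mathlib

open IsLocalRing Submodule

/-- The colon submodule `(N :_M J) = {x ∈ M ∣ J x ⊆ N}`. -/
def Submodule.colonBy {R M : Type*} [CommRing R] [AddCommGroup M] [Module R M]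
    (N : Submodule R M) (J : Ideal R) : Submodule R M where
  carrier := {x | ∀ r ∈ J, r • x ∈ N}
  add_mem' := fun {a b} ha hb r hr => by
    rw [smul_add]; exact N.add_mem (ha r hr) (hb r hr)
  zero_mem' := fun r hr => by rw [smul_zero]; exact N.zero_mem
  smul_mem' := fun c {x} hx r hr => by
    rw [smul_comm]; exact N.smul_mem c (hx r hr)

/-- The length of a module: the height of `⊤` in its lattice of submodules. -/
noncomputable def moduleLength (R M : Type*) [Ring R] [AddCommGroup M] [Module R M] : ℕ∞ :=
  Order.height (⊤ : Submodule R M)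

/-!
Subtracting the length of `M / (Iⁿ⁺¹M : I)` from those of `M / Iⁿ⁺¹M` and `M / IⁿM` leaves the
lengths of `(Iⁿ⁺¹M : I) / Iⁿ⁺¹M` and `(Iⁿ⁺¹M : I) / IⁿM`. Hence `Q(n) - (P(n) - P(n - 1))` is the
length of `(Iⁿ⁺¹M : I) / IⁿM`. By Artin–Rees, applied to the submodules `IᵏM ∩ (Iᵏ⁺²M : I)`, there
is a fixed `c` with `(Iⁿ⁺¹M : I) ∩ IᶜM ⊆ IⁿM` for all `n ≥ c`, so this length is at most that of
`M / IᶜM`. A bounded polynomial is constant, and therefore `Q` has the same leading term as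
`P(n) - P(n - 1)` once the latter has positive degree. The powers of `I` may be replaced by any
stable `I`-filtration.
-/

section Length

variable {R M : Type*} [Ring R] [AddCommGroup M] [Module R M]

theorem length_quotient_eq_length_map_mkQ_add {A B : Submodule R M} (hAB : A ≤ B) :
    Module.length R (M ⧸ A) = Module.length R (B.map A.mkQ) + Module.length R (M ⧸ B) := by
  rw [← (quotientQuotientEquivQuotient A B hAB).length_eq]
  exact Module.length_eq_add_of_exact (B.map A.mkQ).subtype (B.map A.mkQ).mkQ
    (subtype_injective _) (mkQ_surjective _) (LinearMap.exact_subtype_mkQ _)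

theorem length_map_mkQ_add_length_quotient {A D B : Submodule R M} (hAD : A ≤ D) (hDB : D ≤ B) :
    Module.length R (B.map A.mkQ) + Module.length R (M ⧸ D) =
      Module.length R (M ⧸ A) + Module.length R (B.map D.mkQ) := by
  rw [length_quotient_eq_length_map_mkQ_add hDB,
    length_quotient_eq_length_map_mkQ_add (hAD.trans hDB)]
  ac_rfl

theorem length_map_mkQ_le_length_quotient {D B C : Submodule R M} (hDC : D ≤ C)
    (hBC : B ⊓ C ≤ D) : Module.length R (B.map D.mkQ) ≤ Module.length R (M ⧸ C) := by
  refine Module.length_le_of_injective ((factor hDC).comp (B.map D.mkQ).subtype) ?_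
  rw [← LinearMap.ker_eq_bot, LinearMap.ker_eq_bot']
  rintro ⟨_, y, hyB, rfl⟩ hy
  have hyC : y ∈ C := (Quotient.mk_eq_zero C).1 hy
  exact Subtype.ext ((Quotient.mk_eq_zero D).2 (hBC ⟨hyB, hyC⟩))

end Length

section Colon

open Filter

variable {R M : Type*} [CommRing R] [AddCommGroup M] [Module R M] {I : Ideal R}

theorem le_colonBy_iff_smul_le {K N : Submodule R M} : K ≤ N.colonBy I ↔ I • K ≤ N :=
  ⟨fun h => smul_le.2 fun r hr _ hx => h hx r hr,
    fun h _ hx _ hr => h (smul_mem_smul hr hx)⟩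

theorem smul_colonBy_le (N : Submodule R M) : I • N.colonBy I ≤ N :=
  le_colonBy_iff_smul_le.1 le_rfl

theorem colonBy_mono {N N' : Submodule R M} (h : N ≤ N') : N.colonBy I ≤ N'.colonBy I :=
  le_colonBy_iff_smul_le.2 ((smul_colonBy_le N).trans h)

/-- The filtration `Fₖ ∩ (Fₖ₊₂ : I)` attached to an `I`-filtration `F`. The classes of its `k`-th
term in `Fₖ / Fₖ₊₁` are the homogeneous elements of degree `k` in the associated graded module
that are killed by the degree-one part `I / I²` of the associated graded ring. -/
def colonFiltration (F : I.Filtration M) : I.Filtration M where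
  N k := F.N k ⊓ (F.N (k + 2)).colonBy I
  mono k := inf_le_inf (F.mono k) (colonBy_mono (F.mono (k + 2)))
  smul_le k := le_inf ((smul_mono_right I inf_le_left).trans (F.smul_le k)) <|
    le_colonBy_iff_smul_le.2 <| (smul_mono_right I <|
      (smul_mono_right I inf_le_right).trans (smul_colonBy_le _)).trans (F.smul_le (k + 2))

variable {F : I.Filtration M}

theorem eventually_inf_colonBy_le [IsNoetherianRing R] [Module.Finite R M] (hF : F.Stable) :
    ∀ᶠ k in atTop, F.N k ⊓ (F.N (k + 2)).colonBy I ≤ F.N (k + 1) := by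
  have hstable : (colonFiltration F).Stable := hF.of_le fun k => inf_le_left
  obtain ⟨k₀, hk₀⟩ := hstable
  filter_upwards [eventually_ge_atTop (k₀ + 1)] with k hk
  obtain ⟨j, rfl⟩ : ∃ j, k = j + 1 := ⟨k - 1, by omega⟩
  calc (colonFiltration F).N (j + 1) = I • (colonFiltration F).N j := (hk₀ j (by omega)).symm
    _ ≤ I • (F.N (j + 2)).colonBy I := smul_mono_right I inf_le_right
    _ ≤ F.N (j + 2) := smul_colonBy_le _

theorem eventually_colonBy_inf_le [IsNoetherianRing R] [Module.Finite R M] (hF : F.Stable) :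
    ∀ᶠ c in atTop, ∀ n ≥ c, (F.N (n + 1)).colonBy I ⊓ F.N c ≤ F.N n := by
  obtain ⟨c₀, hc₀⟩ := eventually_atTop.1 (eventually_inf_colonBy_le hF)
  filter_upwards [eventually_ge_atTop c₀] with c hc n hn
  induction n, hn using Nat.le_induction with
  | base => exact inf_le_right
  | succ n hn ih =>
    have hle : (F.N (n + 2)).colonBy I ⊓ F.N c ≤ F.N n :=
      (inf_le_inf_right _ (colonBy_mono (F.mono (n + 1)))).trans ih
    exact (le_inf hle inf_le_left).trans (hc₀ n (hc.trans hn))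

theorem eventually_length_map_mkQ_colonBy_le [IsNoetherianRing R] [Module.Finite R M]
    (hF : F.Stable) :
    ∀ᶠ c in atTop, ∀ n ≥ c, Module.length R (((F.N (n + 1)).colonBy I).map (F.N n).mkQ) ≤
      Module.length R (M ⧸ F.N c) :=
  (eventually_colonBy_inf_le hF).mono fun _ hc n hn =>
    length_map_mkQ_le_length_quotient (F.antitone hn) (hc n hn)

theorem length_map_mkQ_colonBy_add (F : I.Filtration M) (n : ℕ) :
    Module.length R (((F.N (n + 1)).colonBy I).map (F.N (n + 1)).mkQ) +
        Module.length R (M ⧸ F.N n) =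
      Module.length R (M ⧸ F.N (n + 1)) +
        Module.length R (((F.N (n + 1)).colonBy I).map (F.N n).mkQ) :=
  length_map_mkQ_add_length_quotient (F.mono n) (le_colonBy_iff_smul_le.2 (F.smul_le n))

end Colon

section BackwardDiff

open Polynomial Filter

theorem degree_le_zero_of_isBoundedUnder_abs_eval_natCast {𝕜 : Type*} [NormedField 𝕜]
    [LinearOrder 𝕜] [IsStrictOrderedRing 𝕜] [OrderTopology 𝕜] [Archimedean 𝕜] {S : 𝕜[X]}
    (hS : IsBoundedUnder (· ≤ ·) atTop fun n : ℕ => |S.eval (n : 𝕜)|) : S.degree ≤ 0 := by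
  contrapose! hS
  exact not_isBoundedUnder_of_tendsto_atTop
    ((abs_tendsto_atTop S hS).comp tendsto_natCast_atTop_atTop)

variable {A : Type*} [CommRing A]

/-- The backward difference `P(X) - P(X - 1)` of a polynomial, whose values are the increments of
the values of `P` at consecutive integers. -/
noncomputable def backwardDiff (P : A[X]) : A[X] :=
  P - taylor (-1) P

theorem eval_backwardDiff (P : A[X]) (x : A) :
    (backwardDiff P).eval x = P.eval x - P.eval (x - 1) := by
  rw [backwardDiff, eval_sub, taylor_eval, sub_eq_add_neg x 1]

theorem natDegree_backwardDiff_le (P : A[X]) :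
    (backwardDiff P).natDegree ≤ P.natDegree - 1 := by
  refine natDegree_le_iff_coeff_eq_zero.2 fun n hn => ?_
  rcases (show P.natDegree ≤ n by omega).eq_or_lt with rfl | hlt
  · rw [backwardDiff, coeff_sub, coeff_taylor_natDegree, coeff_natDegree, sub_self]
  · rw [backwardDiff, coeff_sub, coeff_eq_zero_of_natDegree_lt hlt,
      coeff_eq_zero_of_natDegree_lt (by rwa [natDegree_taylor]), sub_self]

theorem coeff_backwardDiff_natDegree_sub_one (P : A[X]) :
    (backwardDiff P).coeff (P.natDegree - 1) = P.natDegree * P.leadingCoeff := by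
  rcases hP : P.natDegree with _ | s
  · rw [eq_C_of_natDegree_eq_zero hP]
    simp [backwardDiff]
  · have hlinear : (hasseDeriv s P).natDegree ≤ 1 :=
      (natDegree_hasseDeriv_le P s).trans (by omega)
    rw [Nat.add_sub_cancel, backwardDiff, coeff_sub, taylor_coeff,
      eq_X_add_C_of_natDegree_le_one hlinear]
    simp [hasseDeriv_coeff, leadingCoeff, hP, add_comm 1 s]

variable [NoZeroDivisors A] [CharZero A]

theorem natDegree_backwardDiff (P : A[X]) :
    (backwardDiff P).natDegree = P.natDegree - 1 := by
  rcases eq_or_ne P.natDegree 0 with hzero | hpos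
  · have := natDegree_backwardDiff_le P
    omega
  · refine natDegree_eq_of_le_of_coeff_ne_zero (natDegree_backwardDiff_le P) ?_
    rw [coeff_backwardDiff_natDegree_sub_one]
    have hP : P ≠ 0 := by rintro rfl; exact hpos natDegree_zero
    exact mul_ne_zero (Nat.cast_ne_zero.2 hpos) (leadingCoeff_ne_zero.2 hP)

theorem leadingCoeff_backwardDiff (P : A[X]) :
    (backwardDiff P).leadingCoeff = P.natDegree * P.leadingCoeff := by
  rw [leadingCoeff, natDegree_backwardDiff, coeff_backwardDiff_natDegree_sub_one]

theorem leadingCoeff_eq_of_degree_sub_backwardDiff_le_zero {P Q : A[X]} (hP : 2 ≤ P.natDegree)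
    (hPQ : (Q - backwardDiff P).degree ≤ 0) :
    Q.leadingCoeff = P.natDegree * P.leadingCoeff := by
  have hpos : 0 < (backwardDiff P).degree :=
    natDegree_pos_iff_degree_pos.1 (by rw [natDegree_backwardDiff]; omega)
  rw [← leadingCoeff_backwardDiff, ← leadingCoeff_add_of_degree_lt (hPQ.trans_lt hpos),
    sub_add_cancel]

end BackwardDiff

section LengthPolynomial

open Polynomial Filter

/-- `P` is the Hilbert polynomial of the length function `f`: for large `n` the length `f n` is
finite and equal to `P(n)`. -/
def EventuallyEqEval (f : ℕ → ℕ∞) (P : ℚ[X]) : Prop :=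
  ∀ᶠ n in atTop, ∃ len : ℕ, f n = len ∧ (len : ℚ) = P.eval (n : ℚ)

theorem degree_sub_backwardDiff_le_zero {p q d : ℕ → ℕ∞} {P Q : ℚ[X]}
    (hP : EventuallyEqEval p P) (hQ : EventuallyEqEval q Q)
    (hpq : ∀ n, q (n + 1) + p n = p (n + 1) + d n)
    {K : ℕ} (hd : ∀ᶠ n in atTop, d n ≤ K) :
    (Q - backwardDiff P).degree ≤ 0 := by
  refine degree_le_zero_of_isBoundedUnder_abs_eval_natCast ⟨K, ?_⟩
  rw [eventually_map, ← map_add_atTop_eq_nat 1, eventually_map]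
  have hP' := (tendsto_add_atTop_nat 1).eventually hP
  have hQ' := (tendsto_add_atTop_nat 1).eventually hQ
  filter_upwards [hP, hP', hQ', hd] with n ⟨a, ha, haP⟩ ⟨a', ha', haP'⟩ ⟨b, hb, hbQ⟩ hdK
  lift d n to ℕ using ne_top_of_le_ne_top (ENat.natCast_ne_top K) hdK with e he
  have hlen : b + a = a' + e := by
    have := hpq n
    rw [hb, ha, ha', ← he] at this
    exact_mod_cast this
  have heval : (Q - backwardDiff P).eval ((n + 1 : ℕ) : ℚ) = e := by
    have hpred : ((n + 1 : ℕ) : ℚ) - 1 = n := by push_cast; ring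
    rw [eval_sub, eval_backwardDiff, hpred, ← hbQ, ← haP', ← haP]
    linarith [(by exact_mod_cast hlen : (b : ℚ) + a = a' + e)]
  rw [heval, Nat.abs_cast]
  exact_mod_cast hdK

theorem degree_sub_backwardDiff_le_zero_of_stable {R M : Type*} [CommRing R] [IsNoetherianRing R]
    [AddCommGroup M] [Module R M] [Module.Finite R M] {I : Ideal R} {F : I.Filtration M}
    (hF : F.Stable) {P Q : ℚ[X]}
    (hP : EventuallyEqEval (fun n => Module.length R (M ⧸ F.N (n + 1))) P)
    (hQ : EventuallyEqEval
      (fun n => Module.length R (((F.N (n + 1)).colonBy I).map (F.N (n + 1)).mkQ)) Q) :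
    (Q - backwardDiff P).degree ≤ 0 := by
  obtain ⟨c, ⟨K, hK, -⟩, hc⟩ := (hP.and
    ((tendsto_add_atTop_nat 1).eventually (eventually_length_map_mkQ_colonBy_le hF))).exists
  have hbound : ∀ᶠ n in atTop,
      Module.length R (((F.N (n + 1 + 1)).colonBy I).map (F.N (n + 1)).mkQ) ≤ K := by
    filter_upwards [eventually_ge_atTop c] with n hn
    exact (hc (n + 1) (Nat.succ_le_succ hn)).trans_eq hK
  exact degree_sub_backwardDiff_le_zero hP hQ (fun n => length_map_mkQ_colonBy_add F (n + 1)) hbound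

theorem statement6_general {R M : Type*} [CommRing R] [IsNoetherianRing R]
    [AddCommGroup M] [Module R M] [Module.Finite R M] {I : Ideal R} {F : I.Filtration M}
    (hF : F.Stable) {P Q : ℚ[X]} (hPdeg : 2 ≤ P.natDegree)
    (hP : EventuallyEqEval (fun n => Module.length R (M ⧸ F.N (n + 1))) P)
    (hQ : EventuallyEqEval
      (fun n => Module.length R (((F.N (n + 1)).colonBy I).map (F.N (n + 1)).mkQ)) Q) :
    ((P.natDegree - 1).factorial : ℚ) * Q.leadingCoeff =
      (P.natDegree.factorial : ℚ) * P.leadingCoeff := by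
  rw [leadingCoeff_eq_of_degree_sub_backwardDiff_le_zero hPdeg
      (degree_sub_backwardDiff_le_zero_of_stable hF hP hQ),
    ← Nat.mul_factorial_pred (by omega : P.natDegree ≠ 0)]
  push_cast
  ring

end LengthPolynomial

/-- For the maximal ideal: if `dim M = t ≥ 2` then `f⁰_𝔪(M) = e⁰_𝔪(M)`. -/
theorem statement6 {R M : Type*} [CommRing R] [IsNoetherianRing R] [IsLocalRing R]
    [AddCommGroup M] [Module R M] [Module.Finite R M]
    (t : ℕ) (ht : 2 ≤ t)
    (hdim : ringKrullDim (R ⧸ Module.annihilator R M) = t)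
    (P Q : Polynomial ℚ) (hPdeg : P.natDegree = t) (hQdeg : Q.natDegree = t - 1)
    (hP : ∃ N : ℕ, ∀ n ≥ N, ∃ len : ℕ,
      moduleLength R (M ⧸ ((maximalIdeal R) ^ (n + 1) • ⊤ : Submodule R M)) = len ∧
        (len : ℚ) = P.eval (n : ℚ))
    (hQ : ∃ N : ℕ, ∀ n ≥ N, ∃ len : ℕ,
      moduleLength R ↥(Submodule.map ((maximalIdeal R) ^ (n + 1) • ⊤ : Submodule R M).mkQ
        (((maximalIdeal R) ^ (n + 1) • ⊤ : Submodule R M).colonBy (maximalIdeal R))) = len ∧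
        (len : ℚ) = Q.eval (n : ℚ)) :
    ((t - 1).factorial : ℚ) * Q.leadingCoeff = (t.factorial : ℚ) * P.leadingCoeff := by
  subst hPdeg
  simp only [moduleLength, ← Module.length_eq_height] at hP hQ
  exact statement6_general ((maximalIdeal R).stableFiltration_stable ⊤) ht
    (Filter.eventually_atTop.2 hP) (Filter.eventually_atTop.2 hQ)
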